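/- arXiv:math/0703066 — 6 statements merged into one kernel-verified Lean document; each statement's English description precedes it below -/
import Mathlib

section
/- Let G be a finite nonabelian group containing a unique element of order 2. Then G is not (1 | 2,2)-generated; that is, there do not exist elements ℓ₁, ℓ₂, h₁, h₂ ∈ G with ℓ₁ and ℓ₂ of order 2, ℓ₁ℓ₂ · h₁h₂h₁⁻¹h₂⁻¹ = 1, and {ℓ₁, ℓ₂, h₁, h₂} generating G. -/
/-!
Conjugation preserves orders, so a unique involution `z` is central. As `l₁ = l₂ = z`, the relation
reads `h₁ * h₂ * h₁⁻¹ * h₂⁻¹ = 1`, and a group generated by two commuting elements together with a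
central one is abelian.
-/

section

variable {G : Type*} [Group G]

theorem mem_center_of_forall_orderOf_eq {z : G} (hz : ∀ x, orderOf x = orderOf z → x = z) :
    z ∈ Subgroup.center G := by
  refine Subgroup.mem_center_iff.mpr fun g => ?_
  have hconj : g * z * g⁻¹ = z := hz _ ((MulAut.conj g).orderOf_eq z)
  exact mul_inv_eq_iff_eq_mul.mp hconj

theorem isMulCommutative_of_closure_sup_center_eq_top {s : Set G}
    (hcomm : ∀ x ∈ s, ∀ y ∈ s, Commute x y)
    (hgen : Subgroup.closure s ⊔ Subgroup.center G = ⊤) : IsMulCommutative G := by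
  have hself : s ⊆ Subgroup.centralizer s := fun x hx =>
    Subgroup.mem_centralizer_iff.mpr fun y hy => hcomm y hy x hx
  have hcentralizer : Subgroup.centralizer s = ⊤ := by
    rw [eq_top_iff, ← hgen]
    exact sup_le ((Subgroup.closure_le _).mpr hself) (Subgroup.center_le_centralizer s)
  have hcenter : s ⊆ Subgroup.center G := Subgroup.centralizer_eq_top_iff_subset.mp hcentralizer
  rwa [sup_eq_right.mpr ((Subgroup.closure_le _).mpr hcenter), Subgroup.center_eq_top_iff] at hgen

theorem isMulCommutative_of_commute_of_closure_pair_sup_center_eq_top {a b : G} (hab : Commute a b)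
    (hgen : Subgroup.closure {a, b} ⊔ Subgroup.center G = ⊤) : IsMulCommutative G := by
  refine isMulCommutative_of_closure_sup_center_eq_top ?_ hgen
  rintro x (rfl | rfl) y (rfl | rfl)
  exacts [Commute.refl _, hab, hab.symm, Commute.refl _]

end

theorem nonabelian_unique_involution_not_one_two_two_generated_general
    {G : Type*} [Group G]
    (hna : ¬ ∀ a b : G, a * b = b * a)
    (huniq : ∃! x : G, orderOf x = 2) :
    ¬ ∃ l₁ l₂ h₁ h₂ : G,
        orderOf l₁ = 2 ∧ orderOf l₂ = 2 ∧
        l₁ * l₂ * (h₁ * h₂ * h₁⁻¹ * h₂⁻¹) = 1 ∧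
        Subgroup.closure ({l₁, l₂, h₁, h₂} : Set G) = ⊤ := by
  rintro ⟨z, l₂, h₁, h₂, hz, hl₂, hrel, hgen⟩
  obtain rfl : z = l₂ := huniq.unique hz hl₂
  have hcenter : z ∈ Subgroup.center G :=
    mem_center_of_forall_orderOf_eq fun x hx => huniq.unique (hx.trans hz) hz
  have hsq : z * z = 1 := by rw [← pow_two, ← hz, pow_orderOf_eq_one]
  have hcomm : Commute h₁ h₂ := by
    rwa [hsq, one_mul, ← commutatorElement_def, commutatorElement_eq_one_iff_commute] at hrel
  have hpair : Subgroup.closure {h₁, h₂} ⊔ Subgroup.center G = ⊤ := by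
    rw [Set.insert_eq_of_mem (Set.mem_insert z _), Set.insert_eq, Subgroup.closure_union] at hgen
    rw [eq_top_iff, ← hgen, sup_comm]
    gcongr
    rwa [Subgroup.closure_le, Set.singleton_subset_iff]
  have := isMulCommutative_of_commute_of_closure_pair_sup_center_eq_top hcomm hpair
  exact hna mul_comm'

/-- A finite nonabelian group with a unique element of order 2 is not
`(1 | 2,2)`-generated. -/
theorem nonabelian_unique_involution_not_one_two_two_generated
    {G : Type*} [Group G] [Finite G]
    (hna : ¬ ∀ a b : G, a * b = b * a)
    (huniq : ∃! x : G, orderOf x = 2) :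
    ¬ ∃ l₁ l₂ h₁ h₂ : G,
        orderOf l₁ = 2 ∧ orderOf l₂ = 2 ∧
        l₁ * l₂ * (h₁ * h₂ * h₁⁻¹ * h₂⁻¹) = 1 ∧
        Subgroup.closure ({l₁, l₂, h₁, h₂} : Set G) = ⊤ :=
  nonabelian_unique_involution_not_one_two_two_generated_general hna huniq
end

section
/- The dicyclic group of order 12, D_{4,3,-1} = ⟨x, y | x⁴ = y³ = 1, x y x⁻¹ = y⁻¹⟩, is not (1 | 2)-generated; that is, there do not exist elements h₁, h₂ generating this group such that the commutator h₁h₂h₁⁻¹h₂⁻¹ has order 2. -/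
/-!
Modulo the squares `a (2 * k)` of the rotations, the dicyclic group of order `4n` becomes abelian,
so every commutator is such a square and is killed by the `n`-th power. For odd `n` its order,
being a divisor of `n`, cannot be `2`.
-/

section Dicyclic

open QuaternionGroup
open scoped commutatorElement

variable {n : ℕ}

lemma quaternionGroup_inv_a (i : ZMod (2 * n)) : (a i)⁻¹ = a (-i) :=
  rfl

lemma quaternionGroup_inv_xa (i : ZMod (2 * n)) : (xa i)⁻¹ = xa ((n : ZMod (2 * n)) + i) :=
  rfl

lemma quaternionGroup_a_pow (i : ZMod (2 * n)) (k : ℕ) : a i ^ k = a ((k : ZMod (2 * n)) * i) := by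
  induction k with
  | zero => simp
  | succ k ih => rw [pow_succ, ih, a_mul_a, Nat.cast_succ, add_one_mul]

lemma quaternionGroup_exists_commutatorElement_eq_a_two_mul (g h : QuaternionGroup n) :
    ∃ k : ZMod (2 * n), ⁅g, h⁆ = a (2 * k) := by
  rw [commutatorElement_def]
  rcases g with i | i <;> rcases h with j | j <;>
    simp only [quaternionGroup_inv_a, quaternionGroup_inv_xa, a_mul_a, a_mul_xa, xa_mul_a,
      xa_mul_xa, a.injEq]
  case a.a => exact ⟨0, by ring⟩
  case a.xa => exact ⟨n + i, by ring⟩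
  case xa.a => exact ⟨n - j, by ring⟩
  case xa.xa => exact ⟨n + j - i, by ring⟩

lemma quaternionGroup_commutatorElement_pow_eq_one (g h : QuaternionGroup n) : ⁅g, h⁆ ^ n = 1 := by
  obtain ⟨k, hk⟩ := quaternionGroup_exists_commutatorElement_eq_a_two_mul g h
  have two_mul_n : ((2 * n : ℕ) : ZMod (2 * n)) = 0 := ZMod.natCast_self _
  calc ⁅g, h⁆ ^ n = a ((n : ZMod (2 * n)) * (2 * k)) := by rw [hk, quaternionGroup_a_pow]
    _ = a (((2 * n : ℕ) : ZMod (2 * n)) * k) := by push_cast; ring_nf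
    _ = 1 := by rw [two_mul_n, zero_mul, a_zero]

theorem dicyclic12_not_one_two_generated_general (hn : Odd n) (h₁ h₂ : QuaternionGroup n) :
    orderOf (h₁ * h₂ * h₁⁻¹ * h₂⁻¹) ≠ 2 := by
  intro order_eq_two
  have order_dvd : orderOf ⁅h₁, h₂⁆ ∣ n :=
    orderOf_dvd_of_pow_eq_one (quaternionGroup_commutatorElement_pow_eq_one h₁ h₂)
  rw [commutatorElement_def, order_eq_two] at order_dvd
  exact hn.not_two_dvd_nat order_dvd

end Dicyclic

/-- The dicyclic group of order 12 is not `(1 | 2)`-generated. -/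
theorem dicyclic12_not_one_two_generated :
    ¬ ∃ h₁ h₂ : QuaternionGroup 3,
        Subgroup.closure ({h₁, h₂} : Set (QuaternionGroup 3)) = ⊤ ∧
        orderOf (h₁ * h₂ * h₁⁻¹ * h₂⁻¹) = 2 := by
  rintro ⟨h₁, h₂, -, order_eq_two⟩
  exact dicyclic12_not_one_two_generated_general (by decide) h₁ h₂ order_eq_two
end

section
/- The special linear group SL₂(𝔽₃) is not (1 | 2)-generated; that is, there do not exist elements h₁, h₂ generating SL₂(𝔽₃) such that the commutator h₁h₂h₁⁻¹h₂⁻¹ has order 2. -/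
/-!
If `2` is invertible, an element of `SL₂` that is its own inverse equals its own adjugate, hence is
scalar, hence central. So if `h₁` and `h₂` generate and `⁅h₁, h₂⁆ ^ 2 = 1`, then the generators
commute modulo the center and every commutator is central; but the commutator of
`!![0, -1; 1, 0]` and `!![1, 1; 0, 1]` is not scalar. When `2` is merely not nilpotent, the same
argument runs in the image of `SL₂(R)` in `SL₂(R[1/2])`.
-/

open Matrix.SpecialLinearGroup
open scoped MatrixGroups commutatorElement

section Group

variable {G : Type*} [Group G] {N : Subgroup G} [N.Normal]

theorem commutator_le_of_closure_eq_top {s : Set G} (hs : Subgroup.closure s = ⊤)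
    (hN : ∀ a ∈ s, ∀ b ∈ s, ⁅a, b⁆ ∈ N) : commutator G ≤ N := by
  have hcomm (x y : G) : Commute (x : G ⧸ N) y := by
    have hmem (g : G) : g ∈ Subgroup.closure s := hs ▸ Subgroup.mem_top g
    induction hmem x, hmem y using Subgroup.closure_induction₂ with
    | mem a b ha hb =>
      exact commutatorElement_eq_one_iff_commute.mp <|
        (QuotientGroup.eq_one_iff ⁅a, b⁆).mpr (hN a ha b hb)
    | one_left => exact .one_left _
    | one_right => exact .one_right _
    | mul_left _ _ _ _ _ _ hx hy => exact hx.mul_left hy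
    | mul_right _ _ _ _ _ _ hy hz => exact hy.mul_right hz
    | inv_left _ _ _ _ h => exact h.inv_left
    | inv_right _ _ _ _ h => exact h.inv_right
  exact Subgroup.Normal.quotient_commutative_iff_commutator_le.mp
    ⟨⟨fun x y ↦ QuotientGroup.induction_on x fun a ↦ QuotientGroup.induction_on y (hcomm a)⟩⟩

theorem commutator_le_of_closure_pair_eq_top {a b : G} (hab : Subgroup.closure {a, b} = ⊤)
    (hN : ⁅a, b⁆ ∈ N) : commutator G ≤ N := by
  refine commutator_le_of_closure_eq_top hab ?_
  rintro x (rfl | rfl) y (rfl | rfl)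
  · exact commutatorElement_self y ▸ N.one_mem
  · exact hN
  · exact commutatorElement_inv y x ▸ N.inv_mem hN
  · exact commutatorElement_self y ▸ N.one_mem

end Group

section SL2

variable {R S : Type*} [CommRing R] [CommRing S]

theorem SL2_mem_center_of_sq_eq_one (h2 : IsLeftRegular (2 : R)) {A : SL(2, R)} (hA : A ^ 2 = 1) :
    A ∈ Subgroup.center SL(2, R) := by
  have hadj : (A : Matrix (Fin 2) (Fin 2) R) = !![A 1 1, -A 0 1; -A 1 0, A 0 0] := by
    rw [← Matrix.adjugate_fin_two, ← coe_inv, ← eq_inv_of_mul_eq_one_left (pow_two A ▸ hA)]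
  have eq_zero_of_eq_neg {x : R} (hx : x = -x) : x = 0 := h2 (by grind)
  have h01 : A 0 1 = 0 := eq_zero_of_eq_neg (congr_fun₂ hadj 0 1)
  have h10 : A 1 0 = 0 := eq_zero_of_eq_neg (congr_fun₂ hadj 1 0)
  have h00 : A 0 0 = A 1 1 := congr_fun₂ hadj 0 0
  have hscalar : Matrix.scalar (Fin 2) (A 0 0) = A := by
    ext i j
    fin_cases i <;> fin_cases j <;> simp [h01, h10, h00]
  have hdet : (Matrix.scalar (Fin 2) (A 0 0)).det = 1 := hscalar ▸ A.det_coe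
  exact mem_center_iff.mpr ⟨A 0 0, by simpa using hdet, hscalar⟩

theorem not_commutator_SL2_le_comap_center [Nontrivial S] (f : R →+* S) :
    ¬ commutator SL(2, R) ≤ (Subgroup.center SL(2, S)).comap (map f) := by
  intro hle
  let s : SL(2, R) := ⟨!![0, -1; 1, 0], by simp⟩
  let t : SL(2, R) := ⟨!![1, 1; 0, 1], by simp⟩
  have hst : (⁅s, t⁆ : SL(2, R)) 0 1 = -1 := by
    rw [commutatorElement_def, coe_mul, coe_mul, coe_mul, coe_inv, coe_inv]
    simp [s, t, Matrix.adjugate_fin_two]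
  have hcenter : map f ⁅s, t⁆ ∈ Subgroup.center SL(2, S) :=
    hle (Subgroup.commutator_mem_commutator (Subgroup.mem_top s) (Subgroup.mem_top t))
  have hzero : 0 = f ((⁅s, t⁆ : SL(2, R)) 0 1) :=
    congr_fun₂ (scalar_eq_self_of_mem_center hcenter 0) 0 1
  simp [hst] at hzero

theorem SL2F3_not_one_two_generated_general (h2 : ¬ IsNilpotent (2 : R)) :
    ¬ ∃ h₁ h₂ : SL(2, R),
        Subgroup.closure {h₁, h₂} = ⊤ ∧ (h₁ * h₂ * h₁⁻¹ * h₂⁻¹) ^ 2 = 1 := by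
  rintro ⟨h₁, h₂, hgen, hsq⟩
  let T := Localization.Away (2 : R)
  let φ : R →+* T := algebraMap R T
  have : Nontrivial T := by
    rwa [← not_subsingleton_iff_nontrivial, IsLocalization.subsingleton_iff (M := .powers (2 : R))]
  have hunit : IsUnit (2 : T) := map_ofNat φ 2 ▸ IsLocalization.Away.algebraMap_isUnit (2 : R)
  have hcenter : ⁅h₁, h₂⁆ ∈ (Subgroup.center SL(2, T)).comap (map φ) :=
    SL2_mem_center_of_sq_eq_one hunit.isRegular.left
      (by rw [← map_pow, commutatorElement_def, hsq, map_one])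
  exact not_commutator_SL2_le_comap_center φ (commutator_le_of_closure_pair_eq_top hgen hcenter)

end SL2

/-- `SL₂(𝔽₃)` is not `(1 | 2)`-generated. -/
theorem SL2F3_not_one_two_generated :
    ¬ ∃ h₁ h₂ : Matrix.SpecialLinearGroup (Fin 2) (ZMod 3),
        Subgroup.closure
          ({h₁, h₂} : Set (Matrix.SpecialLinearGroup (Fin 2) (ZMod 3))) = ⊤ ∧
        orderOf (h₁ * h₂ * h₁⁻¹ * h₂⁻¹) = 2 := fun ⟨h₁, h₂, hgen, hord⟩ ↦
  SL2F3_not_one_two_generated_general (by rw [isNilpotent_iff_eq_zero]; decide)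
    ⟨h₁, h₂, hgen, orderOf_dvd_iff_pow_eq_one.mp hord.dvd⟩
end

section
/- The general linear group GL₂(𝔽₃) of invertible 2×2 matrices over the field with 3 elements is not (1 | 2)-generated; that is, there do not exist elements h₁, h₂ generating GL₂(𝔽₃) such that the commutator h₁h₂h₁⁻¹h₂⁻¹ has order 2. -/
/-!
Suppose `x` and `y` generate `GL₂(R)` and `⁅x, y⁆ ^ 2 = 1`. Since `⁅x, y⁆` has determinant one, it
equals its own adjugate, which forces it to be scalar as soon as `2` is not a zero divisor. So the
generators commute modulo the centre, hence all of `GL₂(R)` does; but the commutator of a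
transvection with the coordinate swap is not scalar.
-/

open Subgroup Matrix
open scoped MatrixGroups commutatorElement

theorem commutator_le_of_closure_eq_top_s8 {G : Type*} [Group G] {s : Set G} {N : Subgroup G}
    [N.Normal] (hs : closure s = ⊤) (hN : ∀ x ∈ s, ∀ y ∈ s, ⁅x, y⁆ ∈ N) : commutator G ≤ N := by
  let π := QuotientGroup.mk' N
  have image_comm : ∀ a ∈ π '' s, ∀ b ∈ π '' s, a * b = b * a := by
    rintro _ ⟨x, hx, rfl⟩ _ ⟨y, hy, rfl⟩
    rw [← commutatorElement_eq_one_iff_mul_comm, ← map_commutatorElement]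
    exact (QuotientGroup.eq_one_iff _).mpr (hN x hx y hy)
  have closure_image : closure (π '' s) = ⊤ := by
    rw [← MonoidHom.map_closure, hs, map_top_of_surjective π (QuotientGroup.mk'_surjective N)]
  have := isMulCommutative_closure image_comm
  refine Subgroup.Normal.quotient_commutative_iff_commutator_le.mp ⟨⟨fun a b ↦ ?_⟩⟩
  exact setLike_mul_comm (closure_image ▸ mem_top a) (closure_image ▸ mem_top b)

theorem commutator_le_of_closure_pair_eq_top_s8 {G : Type*} [Group G] {x y : G} {N : Subgroup G}
    [N.Normal] (hxy : closure {x, y} = ⊤) (hN : ⁅x, y⁆ ∈ N) : commutator G ≤ N := by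
  have hN' : ⁅y, x⁆ ∈ N := commutatorElement_inv x y ▸ N.inv_mem hN
  refine commutator_le_of_closure_eq_top_s8 hxy ?_
  rintro a (rfl | rfl) b (rfl | rfl) <;> simp [hN, hN']

section CommRing

variable {R : Type*} [CommRing R]

theorem adjugate_eq_self_of_det_eq_one_of_sq_eq_one {n : Type*} [Fintype n] [DecidableEq n]
    {M : Matrix n n R} (hdet : M.det = 1) (hsq : M ^ 2 = 1) : M.adjugate = M :=
  calc
    M.adjugate = M ^ 2 * M.adjugate := by rw [hsq, one_mul]
    _ = M := by rw [sq, mul_assoc, mul_adjugate, hdet, one_smul, mul_one]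

theorem mem_range_scalar_of_adjugate_eq_self (h2 : IsRegular (2 : R))
    {M : Matrix (Fin 2) (Fin 2) R} (hM : M.adjugate = M) : M ∈ Set.range (scalar (Fin 2)) := by
  have eq_zero_of_neg_eq_self (a : R) (ha : -a = a) : a = 0 := by
    apply h2.left
    linear_combination -ha
  have entry (i j) := congr_fun₂ hM i j
  simp only [adjugate_fin_two] at entry
  refine ⟨M 0 0, ?_⟩
  ext i j
  fin_cases i <;> fin_cases j
  · simp
  · simpa using (eq_zero_of_neg_eq_self _ (entry 0 1)).symm
  · simpa using (eq_zero_of_neg_eq_self _ (entry 1 0)).symm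
  · simpa using entry 1 1

theorem mem_center_GL_two_of_det_eq_one_of_sq_eq_one (h2 : IsRegular (2 : R)) {g : GL (Fin 2) R}
    (hdet : GeneralLinearGroup.det g = 1) (hsq : g ^ 2 = 1) : g ∈ center (GL (Fin 2) R) :=
  GeneralLinearGroup.mem_center_iff_val_mem_range_scalar.mpr <|
    mem_range_scalar_of_adjugate_eq_self h2 <|
      adjugate_eq_self_of_det_eq_one_of_sq_eq_one (congrArg Units.val hdet) (congrArg Units.val hsq)

theorem not_commutator_GL_two_le_center [Nontrivial R] :
    ¬ commutator (GL (Fin 2) R) ≤ center (GL (Fin 2) R) := by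
  intro hle
  let t : GL (Fin 2) R := GeneralLinearGroup.upperRightHom 1
  have swap_mul_swap : !![0, 1; 1, 0] * !![0, 1; 1, 0] = (1 : Matrix (Fin 2) (Fin 2) R) := by
    simp [one_fin_two]
  let w : GL (Fin 2) R := ⟨_, _, swap_mul_swap, swap_mul_swap⟩
  have htw : ⁅t, w⁆.val = !![0, 1; -1, 1] := by
    simp [commutatorElement_def, t, w]
  obtain ⟨a, ha⟩ := GeneralLinearGroup.mem_center_iff_val_mem_range_scalar.mp
    (hle (commutator_mem_commutator (mem_top t) (mem_top w)))
  simpa [htw] using congr_fun₂ ha 0 1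

theorem GL2F3_not_one_two_generated_general [Nontrivial R] (h2 : IsRegular (2 : R))
    {h₁ h₂ : GL (Fin 2) R} (hgen : closure {h₁, h₂} = ⊤) : ⁅h₁, h₂⁆ ^ 2 ≠ 1 := by
  intro hsq
  have hdet : GeneralLinearGroup.det ⁅h₁, h₂⁆ = 1 := by
    rw [map_commutatorElement, commutatorElement_eq_one_iff_mul_comm, mul_comm]
  have hcenter := mem_center_GL_two_of_det_eq_one_of_sq_eq_one h2 hdet hsq
  exact not_commutator_GL_two_le_center (commutator_le_of_closure_pair_eq_top_s8 hgen hcenter)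

end CommRing

/-- `GL₂(𝔽₃)` is not `(1 | 2)`-generated. -/
theorem GL2F3_not_one_two_generated :
    ¬ ∃ h₁ h₂ : Matrix.GeneralLinearGroup (Fin 2) (ZMod 3),
        Subgroup.closure
          ({h₁, h₂} : Set (Matrix.GeneralLinearGroup (Fin 2) (ZMod 3))) = ⊤ ∧
        orderOf (h₁ * h₂ * h₁⁻¹ * h₂⁻¹) = 2 := by
  rintro ⟨h₁, h₂, hgen, hord⟩
  exact GL2F3_not_one_two_generated_general (.of_ne_zero (by decide)) hgen
    (orderOf_dvd_iff_pow_eq_one.mp hord.dvd)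
end

section
/- The group ℤ₂ × S₄ is not (1 | 4)-generated; that is, there do not exist elements h₁, h₂ generating ℤ₂ × S₄ such that the commutator h₁h₂h₁⁻¹h₂⁻¹ has order 4. (Indeed, its derived subgroup is isomorphic to A₄, which contains no element of order 4.) -/
/-!
The homomorphisms `fst` and `sign ∘ snd` from `A × Perm α` to commutative groups kill the derived
subgroup, so its elements have the orders of even permutations of `α`. If the order `q` of a
permutation is a prime power, then one of its cycles already has length `q`. When `q = 2 ^ n > 1`
and `α` has at most `q + 1` points, there is no room for a second cycle, so the permutation is a
cycle of even length, which is odd.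
-/

open Equiv

theorem exists_mem_associated_lcm_of_isPrimePow {M : Type*} [CommMonoidWithZero M]
    [NormalizedGCDMonoid M] {s : Multiset M} (hs : IsPrimePow s.lcm) :
    ∃ a ∈ s, Associated a s.lcm := by
  obtain ⟨p, k, hp, hk, hpk⟩ := hs
  by_contra! hne
  have dvd_pred : ∀ a ∈ s, a ∣ p ^ (k - 1) := by
    intro a ha
    obtain ⟨j, hjk, haj⟩ := (dvd_prime_pow hp k).1 (hpk ▸ Multiset.dvd_lcm ha)
    have hjk_ne : j ≠ k := fun hjk_eq => hne a ha (hpk ▸ hjk_eq ▸ haj)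
    exact haj.dvd.trans (pow_dvd_pow p (by lia))
  have lcm_dvd_pred : p ^ k ∣ p ^ (k - 1) := hpk ▸ Multiset.lcm_dvd.2 dvd_pred
  have := (pow_dvd_pow_iff hp.ne_zero hp.not_isUnit).1 lcm_dvd_pred
  lia

section Perm

variable {α : Type*} [Fintype α] {σ : Perm α}

theorem orderOf_mem_cycleType_of_isPrimePow [DecidableEq α] (hσ : IsPrimePow (orderOf σ)) :
    orderOf σ ∈ σ.cycleType := by
  rw [← σ.lcm_cycleType] at hσ ⊢
  obtain ⟨m, hm, hlcm⟩ := exists_mem_associated_lcm_of_isPrimePow hσ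
  rwa [← associated_iff_eq.1 hlcm]

theorem isCycle_of_isPrimePow_orderOf (hσ : IsPrimePow (orderOf σ))
    (hα : Fintype.card α < orderOf σ + 2) : σ.IsCycle := by
  classical
  rw [← Perm.card_cycleType_eq_one, Perm.cycleType_of_card_le_mem_cycleType_add_two hα
    (orderOf_mem_cycleType_of_isPrimePow hσ), Multiset.card_singleton]

theorem sign_eq_neg_one_of_orderOf_eq_two_pow [DecidableEq α] {n : ℕ} (hn : n ≠ 0)
    (hσ : orderOf σ = 2 ^ n) (hα : Fintype.card α < 2 ^ n + 2) : Perm.sign σ = -1 := by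
  have hcycle : σ.IsCycle :=
    isCycle_of_isPrimePow_orderOf (hσ ▸ Nat.prime_two.isPrimePow.pow hn) (hσ ▸ hα)
  rw [hcycle.sign, ← hcycle.orderOf, hσ, (even_two.pow_of_ne_zero hn).neg_one_pow]

end Perm

theorem Z2xS4_not_one_four_generated_general {A α : Type*} [CommGroup A] [Fintype α] {n : ℕ}
    (hn : n ≠ 0) (hα : Fintype.card α < 2 ^ n + 2) {x : A × Perm α}
    (hx : x ∈ commutator (A × Perm α)) : orderOf x ≠ 2 ^ n := by
  classical
  have hfst : x.1 = 1 := Abelianization.commutator_subset_ker (MonoidHom.fst A (Perm α)) hx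
  have hsign : Perm.sign x.2 = 1 :=
    Abelianization.commutator_subset_ker (Perm.sign.comp (MonoidHom.snd A (Perm α))) hx
  intro horder
  rw [Prod.orderOf, hfst, orderOf_one, Nat.lcm_one_left] at horder
  have hsign' : Perm.sign x.2 = -1 := sign_eq_neg_one_of_orderOf_eq_two_pow hn horder hα
  exact absurd (hsign.symm.trans hsign') (by decide)

/-- `ℤ₂ × S₄` is not `(1 | 4)`-generated. -/
theorem Z2xS4_not_one_four_generated :
    ¬ ∃ h₁ h₂ : Multiplicative (ZMod 2) × Equiv.Perm (Fin 4),
        Subgroup.closure ({h₁, h₂} : Set (Multiplicative (ZMod 2) × Equiv.Perm (Fin 4))) = ⊤ ∧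
        orderOf (h₁ * h₂ * h₁⁻¹ * h₂⁻¹) = 4 := by
  rintro ⟨h₁, h₂, -, horder⟩
  exact Z2xS4_not_one_four_generated_general (n := 2) two_ne_zero (by simp)
    (Subgroup.commutator_mem_commutator (Subgroup.mem_top h₁) (Subgroup.mem_top h₂)) horder
end

section
/- The alternating group A₅ on 5 letters is not (1 | 2)-generated; that is, there do not exist even permutations h₁, h₂ generating A₅ such that the commutator h₁h₂h₁⁻¹h₂⁻¹ has order 2. -/
/-!
The action of `SL₂(𝔽₄)` on the five points of the projective line identifies it with `A₅`, so an
involution of `A₅` is a matrix `c ≠ 1` with `c ^ 2 = 1` in characteristic `2`: it is unipotent and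
has trace `2`. Suppose `c = ⁅a, b⁆` and put `N = c - 1`, so that `N ≠ 0` and `N ^ 2 = 0`. As
`c * b = a * b * a⁻¹` has the same trace as `b`, we get `tr (N * b) = 0`, whence
`N * b * N = tr (N * b) • N = 0`, i.e. `b` preserves the line `ker N = range N`. In the same way
`c * a⁻¹` is conjugate to `a⁻¹`, so `a` preserves this line too. The stabilizer of a line in `SL₂`
is solvable, whereas `A₅` is not.
-/

open Module Matrix Matrix.SpecialLinearGroup
open scoped MatrixGroups Pointwise LinearAlgebra.Projectivization commutatorElement

section Trace

variable {R : Type*} [CommRing R] {n : Type*} [Fintype n] [DecidableEq n]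

theorem mul_mul_self_fin_two (A B : Matrix (Fin 2) (Fin 2) R) :
    A * B * A = (A * B).trace • A - A.det • B.adjugate := by
  rw [trace_fin_two, det_fin_two, adjugate_fin_two]
  ext i j
  fin_cases i <;> fin_cases j <;> simp [Matrix.mul_apply, Fin.sum_univ_two] <;> ring

theorem det_sub_one_eq_zero_of_trace_eq_two {A : Matrix (Fin 2) (Fin 2) R} (hdet : A.det = 1)
    (htr : A.trace = 2) : (A - 1).det = 0 := by
  rw [det_fin_two] at hdet ⊢
  rw [trace_fin_two] at htr
  simp only [Matrix.sub_apply, one_apply_eq, one_apply_ne zero_ne_one, one_apply_ne one_ne_zero]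
  linear_combination hdet - htr

theorem sub_one_mul_mul_sub_one_eq_zero {A B : Matrix (Fin 2) (Fin 2) R} (hdet : A.det = 1)
    (htr : A.trace = 2) (hAB : (A * B).trace = B.trace) : (A - 1) * B * (A - 1) = 0 := by
  have htr_mul : ((A - 1) * B).trace = 0 := by rw [sub_mul, one_mul, trace_sub, hAB, sub_self]
  rw [mul_mul_self_fin_two, htr_mul, det_sub_one_eq_zero_of_trace_eq_two hdet htr, zero_smul,
    zero_smul, sub_self]

theorem trace_conj_specialLinearGroup (g h : SpecialLinearGroup n R) :
    (g * h * g⁻¹).1.trace = h.1.trace := by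
  rw [coe_mul, trace_mul_comm, ← coe_mul, inv_mul_cancel_left]

theorem trace_commutatorElement_mul_right (g h : SpecialLinearGroup n R) :
    (⁅g, h⁆.1 * h.1).trace = h.1.trace := by
  rw [← coe_mul, show ⁅g, h⁆ * h = g * h * g⁻¹ by group, trace_conj_specialLinearGroup]

theorem trace_commutatorElement_mul_inv_left (g h : SpecialLinearGroup n R) :
    (⁅g, h⁆.1 * g⁻¹.1).trace = g⁻¹.1.trace := by
  rw [← coe_mul, show ⁅g, h⁆ * g⁻¹ = (g * h) * g⁻¹ * (g * h)⁻¹ by group,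
    trace_conj_specialLinearGroup]

theorem trace_eq_card_of_pow_char_eq_one [IsReduced R] (p : ℕ) [Fact p.Prime] [CharP R p]
    {A : Matrix n n R} (hA : A ^ p = 1) : A.trace = Fintype.card n := by
  cases isEmpty_or_nonempty n
  · simp [trace]
  have hnil : IsNilpotent (A - 1) :=
    ⟨p, by rw [sub_pow_char_of_commute _ (Commute.one_right A), hA, one_pow, sub_self]⟩
  simpa [sub_eq_zero] using (isNilpotent_trace_of_isNilpotent hnil).eq_zero

end Trace

theorem isSolvable_of_commutator_le {G : Type*} [Group G] {H : Subgroup G} [Group.IsSolvable H]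
    (hH : commutator G ≤ H) : Group.IsSolvable G :=
  Group.isSolvable_of_ker_le_range H.subtype (Abelianization.of (G := G))
    (by rwa [Abelianization.ker_of, H.range_subtype])

section Stabilizer

variable {K : Type*} [Field K]

section Hyperplane

variable {n : Type*} [Fintype n] [DecidableEq n] {L : Submodule K (n → K)}

theorem exists_mkQ_smul_eq_smul_mkQ (hL : finrank K ((n → K) ⧸ L) = 1)
    {g : SpecialLinearGroup n K} (hg : g ∈ MulAction.stabilizer (SpecialLinearGroup n K) L) :
    ∃ r : K, ∀ w : n → K, L.mkQ (g • w) = r • L.mkQ w := by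
  have hgL : L ≤ L.comap g.toLin'.toLinearMap := fun v hv ↦ by
    have hgv := Submodule.smul_mem_pointwise_smul v g L hv
    rwa [MulAction.mem_stabilizer_iff.mp hg] at hgv
  obtain ⟨r, hr, -⟩ :=
    (L.mapQ L g.toLin'.toLinearMap hgL).existsUnique_eq_smul_id_of_finrank_eq_one hL
  exact ⟨r, fun w ↦ LinearMap.congr_fun hr (L.mkQ w)⟩

theorem commutatorElement_mem_lineStab (hL : finrank K ((n → K) ⧸ L) = 1)
    {g h : SpecialLinearGroup n K} (hg : g ∈ MulAction.stabilizer (SpecialLinearGroup n K) L)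
    (hh : h ∈ MulAction.stabilizer (SpecialLinearGroup n K) L) : ⁅g, h⁆ ∈ lineStab L := by
  obtain ⟨r, hr⟩ := exists_mkQ_smul_eq_smul_mkQ hL hg
  obtain ⟨s, hs⟩ := exists_mkQ_smul_eq_smul_mkQ hL hh
  intro w
  obtain ⟨u, rfl⟩ : ∃ u, (h * g) • u = w := ⟨(h * g)⁻¹ • w, smul_inv_smul _ _⟩
  rw [smul_smul, show ⁅g, h⁆ * (h * g) = g * h by group, ← Submodule.ker_mkQ L,
    LinearMap.mem_ker, map_sub, mul_smul, mul_smul, hr, hs, hs, hr, smul_comm, sub_self]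

end Hyperplane

theorem isMulCommutative_lineStab {n : Type*} [Fintype n] [DecidableEq n]
    {L : Submodule K (n → K)} (hL : finrank K L = 1) : IsMulCommutative (lineStab L) := by
  have hL_ne : L ≠ ⊥ := Submodule.one_le_finrank_iff.mp hL.ge
  obtain ⟨v, hvL, hv⟩ := L.exists_mem_ne_zero_of_ne_bot hL_ne
  rw [eq_span_singleton_of_mem_of_finrank_eq_one hL hvL hv]
  exact lineStab_isMulCommutative_of_span v hv

theorem isSolvable_stabilizer_line {L : Submodule K (Fin 2 → K)} (hL : finrank K L = 1) :
    Group.IsSolvable (MulAction.stabilizer SL(2, K) L) := by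
  have hquot : finrank K ((Fin 2 → K) ⧸ L) = 1 := by
    rw [L.finrank_quotient, hL, finrank_fin_fun]
  have := isMulCommutative_lineStab hL
  have : Group.IsSolvable ((lineStab L).subgroupOf (MulAction.stabilizer SL(2, K) L)) :=
    Group.isSolvable_of_comm mul_comm'
  refine isSolvable_of_commutator_le (H := (lineStab L).subgroupOf _) ?_
  rw [commutator_def, Subgroup.commutator_le]
  rintro g - h -
  exact commutatorElement_mem_lineStab hquot g.2 h.2

section SquareZero

variable {N : Matrix (Fin 2) (Fin 2) K}

theorem range_mulVecLin_eq_ker (hN : N ≠ 0) (hNN : N * N = 0) :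
    LinearMap.range N.mulVecLin = LinearMap.ker N.mulVecLin := by
  have hle : LinearMap.range N.mulVecLin ≤ LinearMap.ker N.mulVecLin := by
    rw [LinearMap.range_le_ker_iff, ← mulVecLin_mul, hNN, mulVecLin_zero]
  have hpos : 1 ≤ finrank K (LinearMap.range N.mulVecLin) := by
    rw [Submodule.one_le_finrank_iff, Ne, LinearMap.range_eq_bot]
    exact toLin'.map_ne_zero_iff.mpr hN
  have hsum := N.mulVecLin.finrank_range_add_finrank_ker
  rw [finrank_fin_fun] at hsum
  exact Submodule.eq_of_le_of_finrank_le hle (by lia)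

theorem finrank_ker_mulVecLin_eq_one (hN : N ≠ 0) (hNN : N * N = 0) :
    finrank K (LinearMap.ker N.mulVecLin) = 1 := by
  have hsum := N.mulVecLin.finrank_range_add_finrank_ker
  rw [range_mulVecLin_eq_ker hN hNN, finrank_fin_fun] at hsum
  lia

theorem mem_stabilizer_ker_mulVecLin (hN : N ≠ 0) (hNN : N * N = 0) {g : SL(2, K)}
    (hg : N * g.1 * N = 0) : g ∈ MulAction.stabilizer SL(2, K) (LinearMap.ker N.mulVecLin) := by
  refine Submodule.eq_of_le_of_finrank_eq ?_ (LinearEquiv.finrank_map_eq g.toLin' _)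
  nth_rw 1 [← range_mulVecLin_eq_ker hN hNN]
  rintro _ ⟨_, ⟨v, rfl⟩, rfl⟩
  change N *ᵥ (g.1 *ᵥ (N *ᵥ v)) = 0
  rw [mulVec_mulVec, mulVec_mulVec, hg, zero_mulVec]

end SquareZero

theorem exists_line_closure_le_stabilizer {a b : SL(2, K)} (hne : ⁅a, b⁆ ≠ 1)
    (htr : ⁅a, b⁆.1.trace = 2) :
    ∃ L : Submodule K (Fin 2 → K), finrank K L = 1 ∧
      Subgroup.closure {a, b} ≤ MulAction.stabilizer SL(2, K) L := by
  let N := ⁅a, b⁆.1 - 1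
  have hN : N ≠ 0 := fun h ↦ hne (Subtype.ext (sub_eq_zero.mp h))
  have sandwich {B : Matrix (Fin 2) (Fin 2) K} (hB : (⁅a, b⁆.1 * B).trace = B.trace) :
      N * B * N = 0 :=
    sub_one_mul_mul_sub_one_eq_zero (det_coe _) htr hB
  have hNN : N * N = 0 := by
    have hone : (⁅a, b⁆.1 * 1).trace = (1 : Matrix (Fin 2) (Fin 2) K).trace := by
      rw [mul_one, htr, trace_one, Fintype.card_fin, Nat.cast_ofNat]
    rw [← sandwich hone, mul_one]
  have ha : a⁻¹ ∈ MulAction.stabilizer SL(2, K) (LinearMap.ker N.mulVecLin) :=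
    mem_stabilizer_ker_mulVecLin hN hNN (sandwich (trace_commutatorElement_mul_inv_left a b))
  have hb : b ∈ MulAction.stabilizer SL(2, K) (LinearMap.ker N.mulVecLin) :=
    mem_stabilizer_ker_mulVecLin hN hNN (sandwich (trace_commutatorElement_mul_right a b))
  refine ⟨LinearMap.ker N.mulVecLin, finrank_ker_mulVecLin_eq_one hN hNN, ?_⟩
  rw [Subgroup.closure_le, Set.pair_subset_iff]
  exact ⟨inv_mem_iff.mp ha, hb⟩

end Stabilizer

theorem isSolvable_closure_pair_of_orderOf_commutatorElement {p : ℕ} [Fact p.Prime] {K : Type*}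
    [Field K] [CharP K p] {a b : SL(2, K)} (hord : orderOf ⁅a, b⁆ = p) :
    Group.IsSolvable (Subgroup.closure {a, b}) := by
  obtain ⟨hpow, hne⟩ := orderOf_eq_prime_iff.mp hord
  have htr : ⁅a, b⁆.1.trace = 2 := by
    have hpow_coe : ⁅a, b⁆.1 ^ p = 1 := by rw [← coe_pow, hpow, coe_one]
    simpa using trace_eq_card_of_pow_char_eq_one p hpow_coe
  obtain ⟨L, hL, hle⟩ := exists_line_closure_le_stabilizer hne htr
  have := isSolvable_stabilizer_line hL
  exact Group.isSolvable_of_isSolvable_injective (Subgroup.inclusion_injective hle)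

section Cardinality

theorem card_GL_eq_card_SL_mul_card_units {n R : Type*} [Fintype n] [DecidableEq n] [Nonempty n]
    [CommRing R] : Nat.card (GL n R) = Nat.card (SpecialLinearGroup n R) * Nat.card Rˣ := by
  have hker : (GeneralLinearGroup.det (n := n) (R := R)).ker = (toGL (n := n) (R := R)).range := by
    ext g
    refine ⟨fun hg ↦ ⟨⟨g, congrArg Units.val hg⟩, Units.ext rfl⟩, ?_⟩
    rintro ⟨s, rfl⟩
    exact coeToGL_det s
  have hindex : (GeneralLinearGroup.det (n := n) (R := R)).ker.index = Nat.card Rˣ := by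
    rw [Subgroup.index_ker, MonoidHom.range_eq_top.mpr GeneralLinearGroup.det_surjective,
      Subgroup.card_top]
  rw [← Subgroup.card_mul_index (GeneralLinearGroup.det (n := n) (R := R)).ker, hindex, hker,
    ← Nat.card_congr (MonoidHom.ofInjective toGL_injective).toEquiv]

theorem card_SL_two_field {F : Type*} [Field F] [Finite F] :
    Nat.card SL(2, F) = Nat.card F * (Nat.card F ^ 2 - 1) := by
  cases nonempty_fintype F
  have hGL := card_GL_eq_card_SL_mul_card_units (n := Fin 2) (R := F)
  rw [card_GL_field, Fin.prod_univ_two, Nat.card_units, ← Nat.card_eq_fintype_card] at hGL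
  have hq : 0 < Nat.card F - 1 := Nat.sub_pos_of_lt Finite.one_lt_card
  refine Nat.eq_of_mul_eq_mul_right hq (hGL.symm.trans ?_)
  rw [Fin.val_zero, Fin.val_one, pow_zero, pow_one,
    show Nat.card F ^ 2 - Nat.card F = Nat.card F * (Nat.card F - 1) by
      rw [pow_two, Nat.mul_sub_one]]
  ring

end Cardinality

section Alternating

theorem center_specialLinearGroup_eq_bot_of_card_eq_char {n R : Type*} [Fintype n]
    [DecidableEq n] [CommRing R] [IsReduced R] {p : ℕ} [Fact p.Prime] [CharP R p]
    (hn : Fintype.card n = p) :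
    Subgroup.center (SpecialLinearGroup n R) = ⊥ := by
  refine (Subgroup.eq_bot_iff_forall _).mpr fun A hA ↦ ?_
  obtain ⟨r, hr, hrA⟩ := mem_center_iff.mp hA
  rw [hn] at hr
  have hr_one : r = 1 := frobenius_inj R p (by rw [frobenius_def, hr, map_one])
  refine Subtype.ext ?_
  rw [← hrA, hr_one, map_one, coe_one]

theorem nonempty_mulEquiv_alternatingGroup_of_injective {G α : Type*} [Group G] [Fintype α]
    [DecidableEq α] {f : G →* Equiv.Perm α} (hf : Function.Injective f)
    (hcard : 2 * Nat.card G = Nat.card (Equiv.Perm α)) : Nonempty (G ≃* alternatingGroup α) := by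
  have : Finite G := Finite.of_injective f hf
  have e : G ≃* f.range := MonoidHom.ofInjective hf
  have hindex : f.range.index = 2 := by
    have hmul := f.range.index_mul_card
    rw [← hcard, ← Nat.card_congr e.toEquiv] at hmul
    exact Nat.eq_of_mul_eq_mul_right Nat.card_pos hmul
  exact ⟨e.trans (MulEquiv.subgroupCongr (Equiv.Perm.eq_alternatingGroup_of_index_eq_two hindex))⟩

theorem nonempty_SL_two_mulEquiv_alternatingGroup_five {F : Type*} [Field F]
    (hF : Nat.card F = 4) : Nonempty (SL(2, F) ≃* alternatingGroup (Fin 5)) := by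
  have : Finite F := Nat.finite_of_card_ne_zero (by lia)
  cases nonempty_fintype F
  have : CharP F 2 := charP_of_card_eq_prime_pow (f := 2) (by simpa using hF)
  have hline : Nat.card (ℙ F (Fin 2 → F)) = 5 := by
    rw [Projectivization.card_of_finrank_two F _ (finrank_fin_fun F), hF]
  have hinj : Function.Injective (MulAction.toPermHom SL(2, F) (ℙ F (Fin 2 → F))) := by
    rw [← MonoidHom.ker_eq_bot_iff, Projectivization.SL_mulAction_ker,
      center_specialLinearGroup_eq_bot_of_card_eq_char (p := 2) (Fintype.card_fin 2)]
  let e := (Finite.equivFinOfCardEq hline).permCongrHom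
  refine nonempty_mulEquiv_alternatingGroup_of_injective
    (f := e.toMonoidHom.comp (MulAction.toPermHom SL(2, F) _)) (e.injective.comp hinj) ?_
  rw [card_SL_two_field, hF, Nat.card_perm, Nat.card_fin]
  rfl

theorem not_isSolvable_alternatingGroup {α : Type*} [Fintype α] [DecidableEq α]
    (hα : 5 ≤ Fintype.card α) : ¬ Group.IsSolvable (alternatingGroup α) := fun _ ↦
  Equiv.Perm.not_isSolvable α (by simpa using hα) <|
    Group.isSolvable_of_ker_le_range (alternatingGroup α).subtype Equiv.Perm.sign
      (alternatingGroup α).range_subtype.ge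

end Alternating

theorem A5_not_one_two_generated_general {p : ℕ} [Fact p.Prime] {K : Type*} [Field K] [CharP K p]
    {G : Type*} [Group G] (hG : ¬ Group.IsSolvable G) {f : G →* SL(2, K)}
    (hf : Function.Injective f) :
    ¬ ∃ h₁ h₂ : G, Subgroup.closure {h₁, h₂} = ⊤ ∧ orderOf (h₁ * h₂ * h₁⁻¹ * h₂⁻¹) = p := by
  rintro ⟨a, b, hgen, hord⟩
  have hord_map : orderOf ⁅f a, f b⁆ = p := by
    rw [← map_commutatorElement, orderOf_injective f hf, commutatorElement_def, hord]
  have hrange : f.range = Subgroup.closure {f a, f b} := by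
    rw [MonoidHom.range_eq_map, ← hgen, MonoidHom.map_closure, Set.image_pair]
  have : Group.IsSolvable f.range :=
    hrange ▸ isSolvable_closure_pair_of_orderOf_commutatorElement hord_map
  exact hG (Group.isSolvable_of_isSolvable_injective (MonoidHom.ofInjective hf).injective)

/-- The alternating group `A₅` is not `(1 | 2)`-generated. -/
theorem A5_not_one_two_generated :
    ¬ ∃ h₁ h₂ : alternatingGroup (Fin 5),
        Subgroup.closure ({h₁, h₂} : Set (alternatingGroup (Fin 5))) = ⊤ ∧
        orderOf (h₁ * h₂ * h₁⁻¹ * h₂⁻¹) = 2 := by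
  obtain ⟨e⟩ := nonempty_SL_two_mulEquiv_alternatingGroup_five (GaloisField.card 2 2 two_ne_zero)
  exact A5_not_one_two_generated_general (not_isSolvable_alternatingGroup (Fintype.card_fin 5).ge)
    (f := e.symm.toMonoidHom) e.symm.injective
end
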